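/- arXiv:0910.5535 — 2 statements merged into one kernel-verified Lean document; each statement's English description precedes it below -/
import Mathlib

section
/- Let 0 < ε < 1 and let d ≥ 2(1+ε)·log(e/ε) be an integer. Let m = ⌈(1+ε)n⌉, let L = [n] and R = [m], and let G be the random bipartite graph in which each vertex x ∈ L independently chooses d neighbours in R uniformly at random (with replacement, the d choices independent). Then with high probability as n → ∞, G contains a matching of size n, i.e. a matching saturating L. -/
/-!
By Hall's theorem, if no matching saturates `L`, then for some `1 ≤ k ≤ n` there are `k`-sets
`S ⊆ L` and `T ⊆ R` such that all choices of the vertices of `S` lie in `T`. Hence the failure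
probability is at most `∑ k, C(n,k) C(m,k) (k/m)^(dk)` (`ratio_ge`), and this sum tends to `0`.

* For `k ≤ m / 2`, `C(N,k) ≤ (eN/k)^k` bounds the term by `(e² (k/m)³)^k`, because `d ≥ 5`. As
  `e² / 8 < 1`, these terms sum to `O(m⁻³)` (`small_term`).
* For `k ≥ m / 2`, put `ε' = m/n - 1`. The binomial theorem gives `C(n,k) ε'^(n-k) ≤ (1+ε')^n` and
  `C(m,k) (k/m)^k ((m-k)/m)^(m-k) ≤ 1`. With `d ≥ 2(1+ε') log(e/ε')` (the threshold decreases
  in `ε`, `threshold_anti`) the resulting exponent is at most `-ε' n / 50` (`key`, `large_term`), so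
  these at most `n` terms are exponentially small.
-/

open scoped Classical

/-- Hall's theorem and the union bound: each choice function without a saturating matching sends
some set `S` of `k ≥ 1` left vertices into a set `T` of `k` right vertices. (Hall's theorem gives
fewer than `k` neighbours; padding them to exactly `k` costs nothing here and needs `n ≤ m`.) -/
lemma count_le (n m d : ℕ) (hnm : n ≤ m) :
    ((Finset.univ : Finset (Fin n → Fin d → Fin m)).filter
      (fun c => ¬ ∃ φ : Fin n → Fin m,
        Function.Injective φ ∧ ∀ x : Fin n, ∃ j : Fin d, c x j = φ x)).card ≤
    ∑ k ∈ Finset.Icc 1 n, n.choose k * (m.choose k * ((k ^ d) ^ k * (m ^ d) ^ (n - k))) := by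
  -- the choice functions sending `S` into `T`
  let A : Finset (Fin n) → Finset (Fin m) → Finset (Fin n → Fin d → Fin m) := fun S T =>
    Fintype.piFinset (fun x => if x ∈ S then Fintype.piFinset (fun _ => T) else Finset.univ)
  have hA : ∀ S T, (A S T).card = (T.card ^ d) ^ S.card * (m ^ d) ^ (n - S.card) := by
    intro S T
    have : ∀ x : Fin n, (if x ∈ S then Fintype.piFinset (fun _ : Fin d => T)
        else Finset.univ).card = if x ∈ S then T.card ^ d else m ^ d := by
      intro x
      split_ifs <;> simp
    simp only [A, Fintype.card_piFinset, this]
    rw [Finset.prod_ite]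
    simp only [Finset.prod_const]
    congr 2
    · congr 1
      ext; simp
    · have : (Finset.univ.filter (fun x => ¬ x ∈ S)) = Sᶜ := by ext; simp
      rw [this, Finset.card_compl, Fintype.card_fin]
  have hsub : ((Finset.univ : Finset (Fin n → Fin d → Fin m)).filter
      (fun c => ¬ ∃ φ : Fin n → Fin m,
        Function.Injective φ ∧ ∀ x : Fin n, ∃ j : Fin d, c x j = φ x)) ⊆
      (Finset.Icc 1 n).biUnion fun k => (Finset.powersetCard k Finset.univ).biUnion fun S =>
        (Finset.powersetCard k Finset.univ).biUnion fun T => A S T := by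
    intro c hc
    have hc := (Finset.mem_filter.1 hc).2
    have hall := (Finset.all_card_le_biUnion_card_iff_exists_injective
      (fun x : Fin n => Finset.univ.image (c x))).not.2 (by
        rintro ⟨φ, h1, h2⟩
        exact hc ⟨φ, h1, fun x => by simpa using h2 x⟩)
    push Not at hall
    obtain ⟨S, hS⟩ := hall
    have hSn : S.card ≤ n := by simpa using S.card_le_univ
    obtain ⟨T, hT1, hT2⟩ := Finset.exists_superset_card_eq hS.le
      (by simpa using hSn.trans hnm)
    simp only [Finset.mem_biUnion, Finset.mem_powersetCard_univ, Finset.mem_Icc]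
    refine ⟨S.card, ⟨by omega, hSn⟩, S, rfl, T, hT2, ?_⟩
    simp only [A, Fintype.mem_piFinset]
    intro x
    split_ifs with hx
    · rw [Fintype.mem_piFinset]
      intro j
      apply hT1
      rw [Finset.mem_biUnion]
      exact ⟨x, hx, by simp⟩
    · simp
  refine (Finset.card_le_card hsub).trans ?_
  refine Finset.card_biUnion_le.trans (Finset.sum_le_sum fun k _ => ?_)
  refine (Finset.card_biUnion_le_card_mul _ _
    (m.choose k * ((k ^ d) ^ k * (m ^ d) ^ (n - k))) fun S hS => ?_).trans (by simp)
  refine (Finset.card_biUnion_le_card_mul _ _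
    ((k ^ d) ^ k * (m ^ d) ^ (n - k)) fun T hT => ?_).trans (by simp)
  rw [hA, Finset.mem_powersetCard_univ.1 hS, Finset.mem_powersetCard_univ.1 hT]

/-- The union bound, over the pairs `(S, T)` of `k`-subsets of `L` and `R`, for the probability that
all choices of the vertices in `S` lie in `T`. -/
noncomputable def unionTerm (n m d k : ℕ) : ℝ :=
  (n.choose k : ℝ) * (m.choose k : ℝ) * ((k : ℝ) / m) ^ (d * k)

lemma ratio_ge (n m d : ℕ) (hnm : n ≤ m) (hm : 0 < m) :
    1 - ∑ k ∈ Finset.Icc 1 n, unionTerm n m d k ≤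
    (((Finset.univ : Finset (Fin n → Fin d → Fin m)).filter
      (fun c => ∃ φ : Fin n → Fin m,
        Function.Injective φ ∧ ∀ x : Fin n, ∃ j : Fin d, c x j = φ x)).card : ℝ) /
      (Fintype.card (Fin n → Fin d → Fin m) : ℝ) := by
  have h1 := Finset.card_filter_add_card_filter_not (s := (Finset.univ : Finset (Fin n → Fin d → Fin m)))
    (fun c => ∃ φ : Fin n → Fin m,
        Function.Injective φ ∧ ∀ x : Fin n, ∃ j : Fin d, c x j = φ x)
  have h2 := count_le n m d hnm
  have hcard : Fintype.card (Fin n → Fin d → Fin m) = (m ^ d) ^ n := by simp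
  rw [Finset.card_univ, hcard] at h1
  rw [hcard]
  have hm' : (0 : ℝ) < m := by exact_mod_cast hm
  have h3 : ((∑ k ∈ Finset.Icc 1 n,
      n.choose k * (m.choose k * ((k ^ d) ^ k * (m ^ d) ^ (n - k))) : ℕ) : ℝ) =
      (∑ k ∈ Finset.Icc 1 n, unionTerm n m d k) * ((m : ℝ) ^ d) ^ n := by
    push_cast
    rw [Finset.sum_mul]
    refine Finset.sum_congr rfl fun k hk => ?_
    obtain ⟨-, hk⟩ := Finset.mem_Icc.1 hk
    obtain ⟨j, rfl⟩ := Nat.exists_eq_add_of_le hk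
    have : k + j - k = j := by omega
    rw [this, unionTerm, div_pow, ← pow_mul, ← pow_mul, ← pow_mul]
    field_simp
    ring
  rw [le_div_iff₀ (by positivity), sub_mul, one_mul]
  push_cast
  rw [← h3]
  have h1' : (((m ^ d) ^ n : ℕ) : ℝ) = _ := congrArg (Nat.cast : ℕ → ℝ) h1.symm
  have h2' := (Nat.cast_le (α := ℝ)).2 h2
  push_cast at h1' h2' ⊢
  linarith

lemma choose_le_exp (N k : ℕ) (hk : 0 < k) :
    (N.choose k : ℝ) ≤ (Real.exp 1 * N / k) ^ k := by
  have h1 : (N.choose k : ℝ) ≤ (N : ℝ) ^ k / k.factorial := Nat.choose_le_pow_div k N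
  have h2 := Real.pow_div_factorial_le_exp (k : ℝ) (by positivity) k
  have hk' : (0 : ℝ) < k := by exact_mod_cast hk
  refine h1.trans ?_
  rw [div_pow, mul_pow, ← Real.exp_nat_mul, mul_one, le_div_iff₀ (by positivity)]
  calc (N : ℝ) ^ k / k.factorial * (k : ℝ) ^ k = (k : ℝ) ^ k / k.factorial * N ^ k := by ring
    _ ≤ _ := by gcongr

/-- For `k ≤ m / 2` the term decays geometrically, as `exp 2 / 8 < 1`; the factor `m⁻³` is kept to
make the sum over these `k` vanish in the limit. -/
lemma small_term (n m d k : ℕ) (hd : 5 ≤ d) (hk : 1 ≤ k) (hkm : 2 * k ≤ m) (hnm : n ≤ m) :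
    unionTerm n m d k ≤
      Real.exp 2 / (m : ℝ) ^ 3 * ((k : ℝ) ^ 3 * (Real.exp 2 / 8) ^ (k - 1)) := by
  have hk' : (0 : ℝ) < k := by exact_mod_cast hk
  have hm' : (0 : ℝ) < m := by exact_mod_cast (by omega : 0 < m)
  have hy : (k : ℝ) / m ≤ 1 / 2 := by
    rw [div_le_div_iff₀ hm' two_pos]
    have : (2 : ℝ) * k ≤ m := by exact_mod_cast hkm
    linarith
  have hy0 : 0 < (k : ℝ) / m := by positivity
  have e2 : Real.exp 2 = Real.exp 1 ^ 2 := by rw [← Real.exp_nat_mul]; norm_num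
  have h1 : (n.choose k : ℝ) ≤ (Real.exp 1 * m / k) ^ k := by
    refine (choose_le_exp n k hk).trans ?_
    gcongr
  have h2 := choose_le_exp m k hk
  have h3 : ((k : ℝ) / m) ^ (d * k) ≤ ((k : ℝ) / m) ^ (5 * k) :=
    pow_le_pow_of_le_one hy0.le (by linarith) (by gcongr)
  calc unionTerm n m d k
      ≤ (Real.exp 1 * m / k) ^ k * (Real.exp 1 * m / k) ^ k * ((k : ℝ) / m) ^ (5 * k) := by
        unfold unionTerm; gcongr
    _ = (Real.exp 2 * ((k : ℝ) / m) ^ 3) ^ k := by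
        rw [pow_mul, ← mul_pow, ← mul_pow, e2]; congr 1; field_simp
    _ = (Real.exp 2 * ((k : ℝ) / m) ^ 3) * (Real.exp 2 * ((k : ℝ) / m) ^ 3) ^ (k - 1) := by
        rw [← pow_succ']; congr 1; omega
    _ ≤ (Real.exp 2 * ((k : ℝ) / m) ^ 3) * (Real.exp 2 * (1 / 2) ^ 3) ^ (k - 1) := by
        gcongr
    _ = _ := by rw [div_pow]; norm_num; ring

set_option maxHeartbeats 400000 in
/-- The exponential rate of the `k`-th term for `k ≥ m / 2`, where `1 + ε = m / n` and
`s = (m - k) / n`, so that `1 + ε - s = k / n` and `s - ε = (n - k) / n`: it is at most `-ε / 50`,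
uniformly in `ε ≤ 1` and in `k`. The entropy of `k / n` enters through its linear upper bound
`log (1 + ε) - (s - ε) log ε`, the entropy of `k / m` exactly. -/
lemma key (ε s D : ℝ) (h0 : 0 < ε) (h1 : ε ≤ 1) (hs : ε ≤ s) (hs2 : s ≤ (1 + ε) / 2)
    (hD : 2 * (1 + ε) * (1 - Real.log ε) ≤ D) :
    Real.log (1 + ε) - (s - ε) * Real.log ε
      + (1 + ε - s) * Real.log ((1 + ε) / (1 + ε - s)) + s * Real.log ((1 + ε) / s)
      - D * ((1 + ε - s) * Real.log ((1 + ε) / (1 + ε - s))) ≤ - (1 / 50) * ε := by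
  set z := s / (1 + ε) with hz
  have hs0 : 0 < s := by linarith
  have hu : 0 < 1 + ε := by linarith
  have hsz : s = (1 + ε) * z := by rw [hz]; field_simp
  have hz0 : 0 < z := by positivity
  have hz2 : z ≤ 1 / 2 := by rw [hz, div_le_iff₀ hu]; linarith
  -- two terms of the series of `-log (1 - z)`
  have hlog : z + z ^ 2 / 2 ≤ Real.log ((1 + ε) / (1 + ε - s)) := by
    have e : (1 + ε) / (1 + ε - s) = (1 - z)⁻¹ := by
      rw [hsz]; have : 1 - z ≠ 0 := by linarith
      field_simp
    rw [e, Real.log_inv]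
    have := Real.hasSum_pow_div_log_of_abs_lt_one (x := z) (by rw [abs_of_pos hz0]; linarith)
    have h := sum_le_hasSum (Finset.range 2) (fun i _ => by positivity) this
    simp [Finset.sum_range_succ] at h
    norm_num at h
    exact h
  set w := (1 + ε - s) * Real.log ((1 + ε) / (1 + ε - s)) with hw
  have hw1 : s * (1 - z / 2 - z ^ 2 / 2) ≤ w := by
    have := mul_le_mul_of_nonneg_left hlog (by linarith : 0 ≤ 1 + ε - s)
    calc s * (1 - z / 2 - z ^ 2 / 2) = (1 + ε - s) * (z + z ^ 2 / 2) := by rw [hsz]; ring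
      _ ≤ w := this
  have hw2 : 5 / 8 * s ≤ w := by
    refine le_trans ?_ hw1
    nlinarith
  have hw0 : 0 < w := by linarith
  set l := - Real.log ε with hl
  have hls : - Real.log s ≤ l := by
    have := Real.log_le_log h0 hs; linarith
  set t := - Real.log s with ht
  have hs1 : s ≤ 1 := by linarith
  have ht0 : 0 ≤ t := by have := Real.log_nonpos hs0.le hs1; linarith
  -- `log x ≤ sinh (log x) = (x - x⁻¹) / 2` at `x = 1 + ε`
  have hU1 : (1 + ε) * Real.log (1 + ε) ≤ ε * (1 + ε / 2) := by
    have h := Real.self_le_sinh_iff.2 (Real.log_nonneg (by linarith : 1 ≤ 1 + ε))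
    rw [Real.sinh_log hu] at h
    calc _ ≤ (1 + ε) * (((1 + ε) - (1 + ε)⁻¹) / 2) := by gcongr
      _ = _ := by field_simp; ring
  have hU2 : Real.log (1 + ε) ≤ ε := by
    have := Real.log_le_sub_one_of_pos hu; linarith
  set U := Real.log (1 + ε) with hU
  have hlogs : Real.log ((1 + ε) / s) = U + t := by
    rw [Real.log_div hu.ne' hs0.ne']; ring
  rw [hlogs]
  -- the maximum of `-s log s` is `1 / e`
  have hst : s * t ≤ 37 / 100 := by
    have h := Real.log_le_sub_one_of_pos (x := (Real.exp 1 * s)⁻¹) (by positivity)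
    rw [Real.log_inv, Real.log_mul (Real.exp_pos 1).ne' hs0.ne', Real.log_exp] at h
    have h' : t ≤ (Real.exp 1 * s)⁻¹ := by linarith
    have h3 : s * t ≤ (Real.exp 1)⁻¹ := by
      calc s * t ≤ s * (Real.exp 1 * s)⁻¹ := by gcongr
        _ = _ := by field_simp
    refine h3.trans ?_
    rw [inv_le_comm₀ (Real.exp_pos 1) (by norm_num)]
    have := Real.exp_one_gt_d9
    norm_num at this ⊢
    linarith
  have hDw : 2 * (1 + ε) * (1 + l) * w ≤ D * w := by
    have : 1 - Real.log ε = 1 + l := by rw [hl]; ring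
    rw [this] at hD
    gcongr
  -- replace `l` by `t` in the negative coefficient `s - 2 (1 + ε) w`
  have hlt : l * (s - 2 * (1 + ε) * w) ≤ t * (s - 2 * (1 + ε) * w) := by
    apply mul_le_mul_of_nonpos_right hls
    nlinarith
  have hts : t * (2 * s - 2 * (1 + ε) * w) ≤ t * (s * (3 / 2 * s - 2 * ε)) := by
    apply mul_le_mul_of_nonneg_left _ ht0
    have : (1 + ε) * (s * (1 - z / 2 - z ^ 2 / 2)) ≤ (1 + ε) * w := by gcongr
    have e : (1 + ε) * (s * (1 - z / 2 - z ^ 2 / 2)) = s * (1 + ε - s / 2 - s * z / 2) := by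
      rw [hsz]; ring
    have h5 : s * (s * z) ≤ s * (s * (1 / 2)) := by gcongr
    rw [e] at this
    nlinarith
  have hG : U - (s - ε) * Real.log ε + w + s * (U + t) - D * w ≤
      (1 + s) * U - (1 + 2 * ε) * (5 / 8 * s) + t * (s * (3 / 2 * s - 2 * ε)) - l * ε := by
    have h6 : (1 + 2 * ε) * (5 / 8 * s) ≤ (1 + 2 * ε) * w := by gcongr
    have : Real.log ε = - l := by rw [hl]; ring
    rw [this]
    linarith
  refine hG.trans ?_
  -- the sign of `3 / 2 * s - 2 * ε` is not constant for small `ε`; for `ε ≥ 3 / 5` the bound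
  -- `s ≤ (1 + ε) / 2` makes it nonpositive. In both cases the bound is then affine and decreasing
  -- in `s`, so `s = ε` is the worst case.
  rcases le_total ε (3 / 5) with hc | hc
  · have h7 : t * (s * (3 / 2 * s - 2 * ε)) ≤ s * (3 / 2 * (37 / 100)) := by
      have a : s * (s * t) ≤ s * (37 / 100) := by gcongr
      have b : 0 ≤ s * t * ε := by positivity
      nlinarith
    have h8 : s * (U - 7 / 100 - 5 / 4 * ε) ≤ ε * (U - 7 / 100 - 5 / 4 * ε) := by
      apply mul_le_mul_of_nonpos_right hs
      linarith
    have h9 : 2 * (1 - ε) / (1 + ε) ≤ l := by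
      have := Real.le_log_one_add_of_nonneg (x := ε⁻¹ - 1) (by
        have := (one_le_inv₀ h0).2 h1; linarith)
      rw [add_sub_cancel, Real.log_inv] at this
      refine le_trans (le_of_eq ?_) this
      have e : ε⁻¹ - 1 + 2 = (1 + ε) / ε := by field_simp; ring
      rw [e]
      field_simp
    have h10 : 95 / 100 - 3 / 4 * ε ≤ 2 * (1 - ε) / (1 + ε) := by
      rw [le_div_iff₀ hu]; nlinarith
    have h11 : (95 / 100 - 3 / 4 * ε) * ε ≤ l * ε := by gcongr; linarith
    linarith
  · have h7 : t * (s * (3 / 2 * s - 2 * ε)) ≤ 0 := by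
      apply mul_nonpos_of_nonneg_of_nonpos ht0
      apply mul_nonpos_of_nonneg_of_nonpos hs0.le
      linarith
    have h8 : s * (U - 5 / 8 - 5 / 4 * ε) ≤ ε * (U - 5 / 8 - 5 / 4 * ε) := by
      apply mul_le_mul_of_nonpos_right hs
      linarith
    have h11 : 0 ≤ l * ε := by
      have : 0 ≤ l := by linarith
      positivity
    have h12 : 3 / 5 * ε ≤ ε * ε := by gcongr
    linarith

/-- A single term of the binomial expansion of `(x + y) ^ N`. -/
lemma choose_mul_le (N k : ℕ) (hk : k ≤ N) (x y : ℝ) (hx : 0 ≤ x) (hy : 0 ≤ y) :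
    (N.choose k : ℝ) * (x ^ k * y ^ (N - k)) ≤ (x + y) ^ N := by
  rw [add_pow]
  have := Finset.single_le_sum (f := fun i => x ^ i * y ^ (N - i) * (N.choose i : ℝ))
    (s := Finset.range (N + 1)) (fun i _ => by positivity) (Finset.mem_range.2 (by omega : k < N + 1))
  rw [mul_comm]
  exact this

lemma large_term (n m d k : ℕ) (hkn : k ≤ n) (hnm : n < m) (hm2 : m ≤ 2 * n) (hkm : m ≤ 2 * k)
    (hd : 2 * (1 + ((m : ℝ) / n - 1)) * (1 - Real.log ((m : ℝ) / n - 1)) ≤ d) :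
    unionTerm n m d k ≤ Real.exp (- (1 / 50) * ((m : ℝ) / n - 1) * n) := by
  have hn : (0 : ℝ) < n := by exact_mod_cast (by omega : 0 < n)
  have hk : (0 : ℝ) < k := by exact_mod_cast (by omega : 0 < k)
  have hm : (0 : ℝ) < m := by exact_mod_cast (by omega : 0 < m)
  have hnm' : (n : ℝ) < m := by exact_mod_cast hnm
  have hkn' : (k : ℝ) ≤ n := by exact_mod_cast hkn
  have hm2' : (m : ℝ) ≤ 2 * n := by exact_mod_cast hm2
  have hkm' : (m : ℝ) ≤ 2 * k := by exact_mod_cast hkm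
  have hmk : (0 : ℝ) < m - k := by linarith
  have hε0 : 0 < (m : ℝ) / n - 1 := by rw [sub_pos, one_lt_div hn]; exact hnm'
  have hkey := key ((m : ℝ) / n - 1) (((m : ℝ) - k) / n) d hε0
    (by rw [sub_le_iff_le_add, div_le_iff₀ hn]; linarith)
    (by rw [div_sub_one hn.ne']; gcongr)
    (by rw [add_sub_cancel, div_div, div_le_div_iff₀ hn (by positivity)]; nlinarith) hd
  rw [add_sub_cancel] at hkey
  have e1 : (m : ℝ) / n - ((m : ℝ) - k) / n = k / n := by ring
  have e2 : (m : ℝ) / n / (k / n) = m / k := by field_simp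
  have e3 : (m : ℝ) / n / (((m : ℝ) - k) / n) = m / (m - k) := by field_simp
  have e4 : ((m : ℝ) - k) / n - ((m : ℝ) / n - 1) = (n - k) / n := by field_simp; ring
  rw [e1, e2, e3, e4] at hkey
  set ε := (m : ℝ) / n - 1 with hε
  have hu : (m : ℝ) / n = 1 + ε := by rw [hε]; ring
  have hkey' := mul_le_mul_of_nonneg_right hkey hn.le
  have hE : (Real.log ((m : ℝ) / n) - (n - k) / n * Real.log ε + k / n * Real.log (m / k)
      + (m - k) / n * Real.log (m / (m - k)) - d * (k / n * Real.log (m / k))) * n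
      = (n * Real.log (1 + ε) - (n - k) * Real.log ε)
        + (k * Real.log (m / k) + (m - k) * Real.log (m / (m - k)))
        - d * k * Real.log (m / k) := by
    rw [hu]; field_simp; ring
  rw [hE] at hkey'
  refine le_trans ?_ (Real.exp_le_exp.2 hkey')
  have cn : ((n - k : ℕ) : ℝ) = n - k := Nat.cast_sub hkn
  have cm : ((m - k : ℕ) : ℝ) = m - k := Nat.cast_sub (by omega)
  have b1 : (n.choose k : ℝ) ≤ Real.exp (n * Real.log (1 + ε) - (n - k) * Real.log ε) := by
    have h := choose_mul_le n k hkn 1 ε zero_le_one hε0.le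
    rw [one_pow, one_mul] at h
    rw [Real.exp_sub, ← cn, Real.exp_nat_mul, Real.exp_nat_mul, Real.exp_log hε0,
      Real.exp_log (by linarith), le_div_iff₀ (by positivity)]
    exact h
  have b2 : (m.choose k : ℝ) ≤
      Real.exp (k * Real.log (m / k) + (m - k) * Real.log (m / (m - k))) := by
    have h := choose_mul_le m k (by omega) (k / m) ((m - k) / m) (by positivity) (by positivity)
    have e : (k : ℝ) / m + (m - k) / m = 1 := by rw [← add_div, add_sub_cancel, div_self hm.ne']
    rw [e, one_pow] at h
    rw [← inv_div (k : ℝ) m, ← inv_div ((m : ℝ) - k) m, Real.log_inv, Real.log_inv, mul_neg,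
      mul_neg, ← neg_add, Real.exp_neg, Real.exp_add, ← cm, Real.exp_nat_mul, Real.exp_nat_mul,
      cm, Real.exp_log (by positivity), Real.exp_log (by positivity), inv_eq_one_div,
      le_div_iff₀ (by positivity)]
    exact h
  have b3 : ((k : ℝ) / m) ^ (d * k) = Real.exp (- (d * k * Real.log (m / k))) := by
    rw [← inv_div (k : ℝ) m, Real.log_inv, mul_neg, neg_neg]
    have : (d : ℝ) * k = ((d * k : ℕ) : ℝ) := by push_cast; rfl
    rw [this, Real.exp_nat_mul, Real.exp_log (by positivity)]
  rw [sub_eq_add_neg, Real.exp_add, Real.exp_add, ← b3, unionTerm]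
  gcongr

/-- The threshold for `d` decreases in `ε`, so that the hypothesis on `d` passes from `ε` to the
larger value `m / n - 1` produced by rounding up. -/
lemma threshold_anti (a b : ℝ) (ha : 0 < a) (hab : a ≤ b) :
    (1 + b) * (1 - Real.log b) ≤ (1 + a) * (1 - Real.log a) := by
  have hb : 0 < b := by linarith
  have h1 := Real.one_sub_inv_le_log_of_pos hb
  have h2 := Real.one_sub_inv_le_log_of_pos (div_pos hb ha)
  rw [Real.log_div hb.ne' ha.ne', inv_div] at h2
  have h3 : (1 + a) * (1 - a / b) ≤ (1 + a) * (Real.log b - Real.log a) := by gcongr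
  have h4 : (b - a) * (1 - b⁻¹) ≤ (b - a) * Real.log b := by gcongr
  have h5 : 0 ≤ (b - a) * (a / b) := mul_nonneg (by linarith) (by positivity)
  have h6 : (1 + a) * (1 - a / b) + (b - a) * (1 - b⁻¹) = (b - a) + (b - a) * (a / b) := by
    field_simp; ring
  nlinarith

/-- If `0 < ε < 1` and `d ≥ 2(1+ε)log(e/ε)` is an integer, `m = ⌈(1+ε)n⌉`,
and each of the `n` left vertices independently picks `d` uniformly random right vertices
among `m`, then whp (as `n → ∞`) there is a matching saturating the left side, i.e. an
injection `φ : L → R` with `φ x` among the choices of `x` for all `x`. -/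
theorem stmt_0 (ε : ℝ) (hε0 : 0 < ε) (hε1 : ε < 1) (d : ℕ)
    (hd : 2 * (1 + ε) * Real.log (Real.exp 1 / ε) ≤ (d : ℝ)) :
    Filter.Tendsto
      (fun n : ℕ =>
        (((Finset.univ : Finset (Fin n → Fin d → Fin (⌈(1 + ε) * (n : ℝ)⌉₊))).filter
            (fun c => ∃ φ : Fin n → Fin (⌈(1 + ε) * (n : ℝ)⌉₊),
              Function.Injective φ ∧ ∀ x : Fin n, ∃ j : Fin d, c x j = φ x)).card : ℝ) /
          (Fintype.card (Fin n → Fin d → Fin (⌈(1 + ε) * (n : ℝ)⌉₊)) : ℝ))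
      Filter.atTop (nhds 1) := by
  rw [Real.log_div (Real.exp_pos 1).ne' hε0.ne', Real.log_exp] at hd
  -- the threshold is more than `4` because `ε < 1`
  have hd5 : 5 ≤ d := by
    have h := Real.log_le_sub_one_of_pos hε0
    have h' : (1 + ε) * (2 - ε) ≤ (1 + ε) * (1 - Real.log ε) :=
      mul_le_mul_of_nonneg_left (by linarith) (by linarith)
    have : (4 : ℝ) < d := by nlinarith
    exact_mod_cast this
  set r := Real.exp 2 / 8 with hr
  have hr0 : 0 < r := by positivity
  have hr1 : r < 1 := by
    have h1 : Real.exp 2 = Real.exp 1 ^ 2 := by rw [← Real.exp_nat_mul]; norm_num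
    have h2 := Real.exp_one_lt_d9
    have h3 := Real.exp_pos 1
    rw [hr, div_lt_one (by norm_num), h1]
    nlinarith
  have hsum : Summable fun k : ℕ => (k : ℝ) ^ 3 * r ^ (k - 1) := by
    have h := (summable_pow_mul_geometric_of_norm_lt_one (R := ℝ) 3 (r := r)
      (by rwa [Real.norm_of_nonneg hr0.le])).mul_left r⁻¹
    refine h.congr fun k => ?_
    rcases k with _ | k
    · simp
    · rw [Nat.add_sub_cancel, pow_succ r]; field_simp
  set A := ∑' k : ℕ, (k : ℝ) ^ 3 * r ^ (k - 1) with hA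
  have hA0 : 0 ≤ A := tsum_nonneg fun k => by positivity
  set q := Real.exp (-(1 / 50) * ε) with hq
  have hq1 : q < 1 := by rw [hq, Real.exp_lt_one_iff]; linarith
  have hlim : Filter.Tendsto (fun n : ℕ => 1 - (Real.exp 2 * A / n + n * q ^ n))
      Filter.atTop (nhds 1) := by
    have h1 := tendsto_const_div_atTop_nhds_zero_nat (Real.exp 2 * A)
    have h2 := tendsto_self_mul_const_pow_of_lt_one (Real.exp_pos _).le hq1
    have h3 := (h1.add h2).const_sub 1
    rw [add_zero, sub_zero] at h3
    exact h3
  refine tendsto_of_tendsto_of_tendsto_of_le_of_le' hlim tendsto_const_nhds ?_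
    (Filter.Eventually.of_forall fun n => ?_)
  · filter_upwards [Filter.eventually_ge_atTop 1] with n hn
    have hn' : (1 : ℝ) ≤ n := by exact_mod_cast hn
    have hle := Nat.le_ceil ((1 + ε) * (n : ℝ))
    have hm2 : ⌈(1 + ε) * (n : ℝ)⌉₊ ≤ 2 * n := by
      rw [Nat.ceil_le]; push_cast; gcongr; linarith
    have hnm : n < ⌈(1 + ε) * (n : ℝ)⌉₊ := by
      rw [Nat.lt_ceil]; nlinarith
    set m := ⌈(1 + ε) * (n : ℝ)⌉₊ with hm
    refine le_trans ?_ (ratio_ge n m d hnm.le (by omega))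
    have hnm' : (n : ℝ) ≤ m := by exact_mod_cast hnm.le
    have hεm : ε ≤ (m : ℝ) / n - 1 := by
      rw [le_sub_iff_add_le, le_div_iff₀ (by linarith)]; linarith
    have hd' : 2 * (1 + ((m : ℝ) / n - 1)) * (1 - Real.log ((m : ℝ) / n - 1)) ≤ d := by
      have := threshold_anti _ _ hε0 hεm
      linarith
    have hterm : ∀ k ∈ Finset.Icc 1 n, unionTerm n m d k ≤
        Real.exp 2 / (m : ℝ) ^ 3 * ((k : ℝ) ^ 3 * r ^ (k - 1)) + q ^ n := by
      intro k hk
      obtain ⟨hk1, hkn⟩ := Finset.mem_Icc.1 hk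
      rcases le_total (2 * k) m with h | h
      · have := small_term n m d k hd5 hk1 h hnm.le
        have : 0 ≤ q ^ n := by positivity
        linarith
      · have h1 := large_term n m d k hkn hnm hm2 h hd'
        have h2 : Real.exp (- (1 / 50) * ((m : ℝ) / n - 1) * n) ≤ q ^ n := by
          rw [hq, ← Real.exp_nat_mul, Real.exp_le_exp]
          nlinarith
        have : 0 ≤ Real.exp 2 / (m : ℝ) ^ 3 * ((k : ℝ) ^ 3 * r ^ (k - 1)) := by positivity
        linarith
    have hS := Finset.sum_le_sum hterm
    rw [Finset.sum_add_distrib, ← Finset.mul_sum] at hS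
    simp only [Finset.sum_const, Nat.card_Icc, Nat.add_sub_cancel, nsmul_eq_mul] at hS
    have h3 : ∑ k ∈ Finset.Icc 1 n, (k : ℝ) ^ 3 * r ^ (k - 1) ≤ A :=
      hsum.sum_le_tsum _ fun k _ => by positivity
    have h4 : Real.exp 2 / (m : ℝ) ^ 3 * ∑ k ∈ Finset.Icc 1 n, (k : ℝ) ^ 3 * r ^ (k - 1) ≤
        Real.exp 2 * A / n := by
      have hmn : (n : ℝ) ≤ (m : ℝ) ^ 3 :=
        hnm'.trans (le_self_pow₀ (by linarith) (by norm_num))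
      calc _ ≤ Real.exp 2 / (n : ℝ) * A := by gcongr
        _ = _ := by ring
    linarith
  · apply div_le_one_of_le₀ _ (by positivity)
    exact_mod_cast Finset.card_le_univ _
end

section
/- Fix an integer d ≥ 3. Let z₁ > 0 solve z₁ = (e^{z₁} − 1)/(d − 1) and set α₁ = z₁/(d(1 − e^{−z₁})^{d−1}). Suppose α > α₁ and let z* be the largest positive solution of (z/(αd))^{1/(d−1)} + e^{−z} − 1 = 0. Then (d − 1) z* / (e^{z*} − 1) < 1. -/
/-!
Write `f z = (z / (α d)) ^ (1 / (d - 1)) + e^{-z} - 1`. The condition `α > α₁` says exactly that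
`f z₁ < 0`, while `f (α d) = e^{-α d} > 0` and `α d > z₁`. By the intermediate value theorem `f`
has a zero beyond `z₁`, so the largest zero `zs` satisfies `zs > z₁`. Strict convexity of `exp`
makes `(e^z - 1) / z` strictly increasing; it equals `d - 1` at `z₁`, so it exceeds `d - 1`
at `zs`.
-/

theorem stmt_16 (d : ℕ) (hd : 3 ≤ d) (z₁ α zs : ℝ)
    (hz₁pos : 0 < z₁) (hz₁eq : z₁ = (Real.exp z₁ - 1) / ((d : ℝ) - 1))
    (hα : z₁ / ((d : ℝ) * (1 - Real.exp (-z₁)) ^ (d - 1)) < α)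
    (hzs : 0 < zs)
    (hzse : (zs / (α * d)) ^ (1 / ((d : ℝ) - 1)) + Real.exp (-zs) - 1 = 0)
    (hmax : ∀ z > (0 : ℝ),
      (z / (α * d)) ^ (1 / ((d : ℝ) - 1)) + Real.exp (-z) - 1 = 0 → z ≤ zs) :
    ((d : ℝ) - 1) * zs / (Real.exp zs - 1) < 1 := by
  have hd3 : (3 : ℝ) ≤ d := by exact_mod_cast hd
  have hd1 : (0 : ℝ) < (d : ℝ) - 1 := by linarith
  have hcast : ((d - 1 : ℕ) : ℝ) = (d : ℝ) - 1 := by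
    rw [Nat.cast_sub (by omega)]; simp
  have he : Real.exp (-z₁) < 1 := Real.exp_lt_one_iff.mpr (by linarith)
  have hbase : 0 < 1 - Real.exp (-z₁) := by linarith
  have hpow : 0 < (1 - Real.exp (-z₁)) ^ (d - 1) := by positivity
  have hpow1 : (1 - Real.exp (-z₁)) ^ (d - 1) ≤ 1 :=
    pow_le_one₀ hbase.le (by linarith [Real.exp_pos (-z₁)])
  have hαpos : 0 < α := lt_trans (by positivity) hα
  have hαd : 0 < α * d := by positivity
  have hlt : z₁ < α * d * (1 - Real.exp (-z₁)) ^ (d - 1) := by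
    rw [div_lt_iff₀ (by positivity)] at hα
    linarith
  have hz₁αd : z₁ < α * d := hlt.trans_le (mul_le_of_le_one_right hαd.le hpow1)
  have hneg : (z₁ / (α * d)) ^ (1 / ((d : ℝ) - 1)) + Real.exp (-z₁) - 1 < 0 := by
    have h1 : z₁ / (α * d) < (1 - Real.exp (-z₁)) ^ (d - 1) := by
      rw [div_lt_iff₀ hαd]; linarith
    have h2 := Real.rpow_lt_rpow (by positivity) h1 (one_div_pos.mpr hd1)
    rw [← hcast, one_div, Real.pow_rpow_inv_natCast hbase.le (by omega)] at h2
    rw [← hcast, one_div]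
    linarith
  have hpos : 0 < (α * d / (α * d)) ^ (1 / ((d : ℝ) - 1)) + Real.exp (-(α * d)) - 1 := by
    rw [div_self hαd.ne', Real.one_rpow]
    linarith [Real.exp_pos (-(α * d))]
  have hcont : Continuous fun z : ℝ =>
      (z / (α * d)) ^ (1 / ((d : ℝ) - 1)) + Real.exp (-z) - 1 := by
    have h := (Real.continuous_rpow_const (one_div_pos.mpr hd1).le).comp
      (continuous_id.div_const (α * d))
    exact (h.add (Real.continuous_exp.comp continuous_neg)).sub continuous_const
  obtain ⟨w, hw, hw0⟩ := intermediate_value_Ioo hz₁αd.le hcont.continuousOn ⟨hneg, hpos⟩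
  have hz : z₁ < zs := hw.1.trans_le (hmax w (hz₁pos.trans hw.1) hw0)
  have hsec := strictConvexOn_exp.secant_strict_mono (Set.mem_univ (0 : ℝ)) (Set.mem_univ z₁)
    (Set.mem_univ zs) hz₁pos.ne' hzs.ne' hz
  simp only [Real.exp_zero, sub_zero] at hsec
  have hslope : (Real.exp z₁ - 1) / z₁ = (d : ℝ) - 1 := by
    rw [eq_div_iff hd1.ne'] at hz₁eq
    rw [div_eq_iff hz₁pos.ne']
    linarith
  rw [hslope, lt_div_iff₀ hzs] at hsec
  rwa [div_lt_one (by linarith [Real.add_one_lt_exp hzs.ne'])]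
end
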